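/- Let Σ₁, Σ₂ be positive definite n×n real matrices such that all eigenvalues of Σ₂^{-1/2} Σ₁ Σ₂^{-1/2} are at least 1/2, and let μ₁, μ₂ ∈ ℝⁿ. Then the total variation distance between the Gaussian measures N(μ₁, Σ₁) and N(μ₂, Σ₂) is at most ½·√(‖Σ₂^{-1/2}Σ₁Σ₂^{-1/2} - I‖_F² + (μ₂-μ₁)ᵀΣ₂^{-1}(μ₂-μ₁)). -/

import Mathlib

open MeasureTheory Matrix

/-- The multivariate Gaussian measure `N(μ, Σ)` on `ℝⁿ`, given by its density with
respect to Lebesgue measure (here `S = Σ` is the covariance matrix). -/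
noncomputable def gaussianMeasure (n : ℕ) (μ : Fin n → ℝ)
    (S : Matrix (Fin n) (Fin n) ℝ) : Measure (Fin n → ℝ) :=
  volume.withDensity fun x =>
    ENNReal.ofReal (((2 * Real.pi) ^ n * S.det) ^ (-(1 : ℝ) / 2) *
      Real.exp (-(1 / 2) * ((x - μ) ⬝ᵥ S⁻¹ *ᵥ (x - μ))))

/-- Total variation distance between two measures: the supremum over measurable sets `A`
of `|μ(A) - ν(A)|`. -/
noncomputable def tvDist {α : Type*} [MeasurableSpace α] (μ ν : Measure α) : ℝ :=
  sSup {r : ℝ | ∃ A : Set α, MeasurableSet A ∧ r = |(μ A).toReal - (ν A).toReal|}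

/-- Frobenius norm of a matrix. -/
noncomputable def frobNorm {n : ℕ} (M : Matrix (Fin n) (Fin n) ℝ) : ℝ :=
  Real.sqrt (∑ i : Fin n, ∑ j : Fin n, M i j ^ 2)

open ProbabilityTheory
open scoped NNReal ENNReal

theorem two_mul_sq_measureReal_sub_le {α : Type*} [MeasurableSpace α] {P Q : Measure α}
    [IsProbabilityMeasure P] [IsProbabilityMeasure Q] {g : α → ℝ} (hg : Measurable g)
    (hPQ : P = Q.withDensity fun x => ENNReal.ofReal (Real.exp (g x))) (hgi : Integrable g P)
    {A : Set α} (hA : MeasurableSet A) :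
    2 * (P.real A - Q.real A) ^ 2 ≤ ∫ x, g x ∂P := by
  set s : ℝ := 4 * (P.real A - Q.real A) with hs
  let X : α → ℝ := A.indicator 1
  have hXm : Measurable X := measurable_one.indicator hA
  let h : α → ℝ := fun x => s * (X x - Q.real A) - s ^ 2 / 8
  have hhm : Measurable h := by fun_prop
  have hX01 : ∀ x, X x ∈ Set.Icc (0 : ℝ) 1 := by
    intro x
    by_cases hx : x ∈ A <;> simp [X, hx]
  have hXint : ∀ (μ : Measure α) [IsProbabilityMeasure μ], ∫ x, X x ∂μ = μ.real A := by
    intro μ _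
    simpa [X] using integral_indicator_one (μ := μ) hA
  have hsub := hasSubgaussianMGF_of_mem_Icc (μ := Q) hXm.aemeasurable (ae_of_all _ hX01)
  have hexp_eq : ∀ x, Real.exp (h x) =
      Real.exp (-(s ^ 2 / 8)) * Real.exp (s * (X x - Q.real A)) := by
    intro x
    rw [← Real.exp_add]
    congr 1
    simp only [h]
    ring
  rw [hXint Q] at hsub
  have hexp_int : Integrable (fun x => Real.exp (h x)) Q := by
    simp only [hexp_eq]
    exact (hsub.integrable_exp_mul s).const_mul _
  have hexp_le : ∫ x, Real.exp (h x) ∂Q ≤ 1 := by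
    simp only [hexp_eq]
    rw [integral_const_mul]
    have hmgf : ∫ x, Real.exp (s * (X x - Q.real A)) ∂Q ≤ Real.exp (s ^ 2 / 8) := by
      refine (hsub.mgf_le s).trans_eq (congrArg Real.exp ?_)
      rw [NNReal.coe_pow, NNReal.coe_div, coe_nnnorm, NNReal.coe_ofNat, sub_zero, norm_one]
      ring
    calc _ ≤ Real.exp (-(s ^ 2 / 8)) * Real.exp (s ^ 2 / 8) := by gcongr
      _ = 1 := by rw [← Real.exp_add, neg_add_cancel, Real.exp_zero]
  have hmul : ∀ x, (ENNReal.ofReal (Real.exp (g x))).toReal • Real.exp (h x - g x) =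
      Real.exp (h x) := by
    intro x
    rw [ENNReal.toReal_ofReal (Real.exp_pos _).le, smul_eq_mul, ← Real.exp_add]
    ring_nf
  have hem : Measurable fun x => ENNReal.ofReal (Real.exp (g x)) := by fun_prop
  have hI : Integrable (fun x => Real.exp (h x - g x)) P := by
    rw [hPQ, integrable_withDensity_iff_integrable_smul' hem (by simp)]
    simpa only [hmul] using hexp_int
  have hIle : ∫ x, Real.exp (h x - g x) ∂P ≤ 1 := by
    rw [hPQ, integral_withDensity_eq_integral_toReal_smul hem (by simp)]
    simpa only [hmul] using hexp_le
  have hXi : Integrable X P := Integrable.of_mem_Icc 0 1 hXm.aemeasurable (ae_of_all _ hX01)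
  have hhi : Integrable h P := ((hXi.sub (integrable_const _)).const_mul s).sub (integrable_const _)
  have hh : ∫ x, h x ∂P = 2 * (P.real A - Q.real A) ^ 2 := by
    have hXb : Integrable (fun x => X x - Q.real A) P := hXi.sub (integrable_const _)
    simp only [h]
    rw [integral_sub (hXb.const_mul s) (integrable_const _),
      integral_const_mul, integral_sub hXi (integrable_const _), hXint P]
    simp [hs]
    ring
  have hh1 : Integrable (fun x => h x + 1) P := hhi.add (integrable_const 1)
  have key : ∫ x, (h x + 1 - Real.exp (h x - g x)) ∂P ≤ ∫ x, g x ∂P := by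
    refine integral_mono (hh1.sub hI) hgi fun x => ?_
    have := Real.add_one_le_exp (h x - g x)
    simp only
    linarith
  rw [integral_sub hh1 hI, integral_add hhi (integrable_const 1), hh]
    at key
  simp at key
  linarith

theorem pi_gaussianReal_eq_withDensity {ι : Type*} [Fintype ι] (m : ι → ℝ) {v : ι → ℝ≥0}
    (hv : ∀ i, v i ≠ 0) :
    Measure.pi (fun i => gaussianReal (m i) (v i)) =
      volume.withDensity fun x : ι → ℝ =>
        ENNReal.ofReal (∏ i, gaussianPDFReal (m i) (v i) (x i)) := by
  refine Measure.pi_eq fun s hs => ?_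
  rw [withDensity_apply _ (MeasurableSet.univ_pi hs), volume_pi, Measure.restrict_pi_pi,
    ← ofReal_integral_eq_lintegral_ofReal, integral_fintype_prod_eq_prod,
    ENNReal.ofReal_prod_of_nonneg]
  · simp only [gaussianReal_apply_eq_integral _ (hv _)]
  · exact fun i _ => integral_nonneg fun x => gaussianPDFReal_nonneg _ _ _
  · exact Integrable.fintype_prod fun i => (integrable_gaussianPDFReal _ _).restrict
  · exact ae_of_all _ fun x => Finset.prod_nonneg fun i _ => gaussianPDFReal_nonneg _ _ _

theorem dotProduct_inv_conj_mulVec {n : ℕ} {T : Matrix (Fin n) (Fin n) ℝ} (hT : T.det ≠ 0)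
    {v : Fin n → ℝ} (hv : ∀ i, v i ≠ 0) (y : Fin n → ℝ) :
    (T *ᵥ y) ⬝ᵥ (T * diagonal v * Tᵀ)⁻¹ *ᵥ (T *ᵥ y) = ∑ i, y i ^ 2 / v i := by
  have hTu : IsUnit T.det := hT.isUnit
  have hinv : (T * diagonal v * Tᵀ)⁻¹ = T⁻¹ᵀ * diagonal (fun i => (v i)⁻¹) * T⁻¹ := by
    refine inv_eq_right_inv ?_
    have h1 : Tᵀ * T⁻¹ᵀ = 1 := by rw [← transpose_mul, nonsing_inv_mul _ hTu, transpose_one]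
    have h2 : diagonal v * diagonal (fun i => (v i)⁻¹) = 1 := by
      rw [diagonal_mul_diagonal, ← diagonal_one]
      congr 1
      ext i
      exact mul_inv_cancel₀ (hv i)
    calc _ = T * (diagonal v * (Tᵀ * T⁻¹ᵀ) * diagonal (fun i => (v i)⁻¹)) * T⁻¹ := by
          simp only [Matrix.mul_assoc]
      _ = 1 := by rw [h1, Matrix.mul_one, h2, Matrix.mul_one, mul_nonsing_inv _ hTu]
  have h3 : (T⁻¹ * T) = 1 := nonsing_inv_mul _ hTu
  rw [hinv, mulVec_mulVec, Matrix.mul_assoc, h3, Matrix.mul_one, ← mulVec_mulVec,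
    dotProduct_mulVec, vecMul_transpose, mulVec_mulVec, h3, one_mulVec]
  simp only [dotProduct, mulVec_diagonal]
  refine Finset.sum_congr rfl fun i _ => ?_
  ring

theorem gaussianMeasure_eq_map_pi {n : ℕ} {T : Matrix (Fin n) (Fin n) ℝ} (hT : T.det ≠ 0)
    {v : Fin n → ℝ≥0} (hv : ∀ i, v i ≠ 0) (b m : Fin n → ℝ) :
    gaussianMeasure n (b + T *ᵥ m) (T * diagonal (fun i => (v i : ℝ)) * Tᵀ) =
      (Measure.pi fun i => gaussianReal (m i) (v i)).map fun y => b + T *ᵥ y := by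
  have hφ : Measurable fun y : Fin n → ℝ => b + T *ᵥ y :=
    (Continuous.add continuous_const (continuous_const.matrix_mulVec continuous_id)).measurable
  have hmap : (volume : Measure (Fin n → ℝ)).map (fun y => b + T *ᵥ y) =
      ENNReal.ofReal |T.det⁻¹| • volume := by
    have h1 := Real.map_matrix_volume_pi_eq_smul_volume_pi hT
    have h2 : (fun y : Fin n → ℝ => b + T *ᵥ y) = (fun x => b + x) ∘ (toLin' T) := by
      ext y; simp
    rw [h2, ← Measure.map_map (measurable_const_add b)
      (LinearMap.continuous_on_pi _).measurable, h1, Measure.map_smul, map_add_left_eq_self]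
  have hd : 0 < |T.det| := abs_pos.mpr hT
  have hvol : (volume : Measure (Fin n → ℝ)) =
      ENNReal.ofReal |T.det| • (volume : Measure (Fin n → ℝ)).map (fun y => b + T *ᵥ y) := by
    rw [hmap, smul_smul, ← ENNReal.ofReal_mul hd.le, ← abs_mul, mul_inv_cancel₀ hT]
    simp
  have hdens : Measurable fun x : Fin n → ℝ => ENNReal.ofReal
      (((2 * Real.pi) ^ n * (T * diagonal (fun i => (v i : ℝ)) * Tᵀ).det) ^ (-(1 : ℝ) / 2) *
      Real.exp (-(1 / 2) * ((x - (b + T *ᵥ m)) ⬝ᵥ (T * diagonal (fun i => (v i : ℝ)) * Tᵀ)⁻¹ *ᵥ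
        (x - (b + T *ᵥ m))))) := by
    refine (Continuous.measurable ?_).ennreal_ofReal
    fun_prop
  ext A hA
  rw [Measure.map_apply hφ hA, pi_gaussianReal_eq_withDensity m hv,
    withDensity_apply _ (hφ hA), gaussianMeasure, withDensity_apply _ hA]
  conv_lhs => rw [hvol]
  rw [Measure.restrict_smul, lintegral_smul_measure, setLIntegral_map hA hdens hφ, smul_eq_mul,
    ← lintegral_const_mul' _ _ ENNReal.ofReal_ne_top]
  refine lintegral_congr fun y => ?_
  rw [← ENNReal.ofReal_mul hd.le]
  congr 1
  have hsub : b + T *ᵥ y - (b + T *ᵥ m) = T *ᵥ (y - m) := by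
    rw [mulVec_sub]; abel
  have hv' : ∀ i, (0 : ℝ) < v i := fun i => by
    exact_mod_cast pos_iff_ne_zero.mpr (hv i)
  rw [hsub, dotProduct_inv_conj_mulVec hT (fun i => (hv' i).ne')]
  simp only [gaussianPDFReal, Finset.prod_mul_distrib, ← Real.exp_sum]
  rw [← mul_assoc]
  congr 1
  · have hprod : (0 : ℝ) < ∏ i, (2 * Real.pi * v i) :=
      Finset.prod_pos fun i _ => by have := hv' i; positivity
    have hdet : (2 * Real.pi) ^ n * (T * diagonal (fun i => (v i : ℝ)) * Tᵀ).det =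
        T.det ^ 2 * ∏ i, (2 * Real.pi * v i) := by
      rw [det_mul, det_mul, det_transpose, det_diagonal, Finset.prod_mul_distrib]
      simp
      ring
    rw [hdet, neg_div, Real.rpow_neg (by positivity), ← Real.sqrt_eq_rpow,
      Real.sqrt_mul (sq_nonneg _), Real.sqrt_sq_eq_abs, mul_inv, mul_inv_cancel_left₀ hd.ne',
      Finset.prod_inv_distrib, Real.sqrt_prod]
    exact fun i _ => by have := hv' i; positivity
  · congr 1
    rw [Finset.mul_sum]
    refine Finset.sum_congr rfl fun i _ => ?_
    have := (hv' i).ne'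
    simp only [Pi.sub_apply]
    field_simp

theorem log_gaussianPDFReal (m : ℝ) {v : ℝ≥0} (hv : v ≠ 0) (x : ℝ) :
    Real.log (gaussianPDFReal m v x) =
      -(1 / 2) * Real.log (2 * Real.pi) - 1 / 2 * Real.log v - (x - m) ^ 2 / (2 * v) := by
  have hv' : (0 : ℝ) < v := by exact_mod_cast pos_iff_ne_zero.mpr hv
  rw [gaussianPDFReal, Real.log_mul (by positivity) (Real.exp_pos _).ne', Real.log_exp,
    Real.log_inv, Real.log_sqrt (by positivity), Real.log_mul (by positivity) hv'.ne']
  ring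

theorem integrable_sub_sq_gaussianReal (m c : ℝ) (v : ℝ≥0) :
    Integrable (fun x => (x - c) ^ 2) (gaussianReal m v) :=
  ((memLp_id_gaussianReal 2).sub (memLp_const c)).integrable_sq

theorem integral_sub_sq_gaussianReal (m c : ℝ) (v : ℝ≥0) :
    ∫ x, (x - c) ^ 2 ∂gaussianReal m v = v + (m - c) ^ 2 := by
  have hid : Integrable (fun x => x) (gaussianReal m v) :=
    (memLp_id_gaussianReal 1).integrable le_rfl
  have hvar : ∫ x, (x - m) ^ 2 ∂gaussianReal m v = v := by
    rw [← variance_fun_id_gaussianReal (μ := m) (v := v), variance_eq_integral (by fun_prop),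
      integral_id_gaussianReal]
  have : ∀ x : ℝ, (x - c) ^ 2 = (x - m) ^ 2 + (2 * (m - c) * x + ((m - c) ^ 2 - 2 * (m - c) * m)) :=
    fun x => by ring
  have hlin : Integrable (fun x => 2 * (m - c) * x + ((m - c) ^ 2 - 2 * (m - c) * m))
      (gaussianReal m v) := (hid.const_mul _).add (integrable_const _)
  rw [integral_congr_ae (ae_of_all _ this), integral_add (integrable_sub_sq_gaussianReal m m v) hlin,
    integral_add (hid.const_mul _)
    (integrable_const _), integral_const_mul, integral_id_gaussianReal, hvar]
  simp

theorem integrable_log_gaussianPDFReal (m m' : ℝ) {v w : ℝ≥0} (hw : w ≠ 0) :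
    Integrable (fun x => Real.log (gaussianPDFReal m' w x)) (gaussianReal m v) := by
  simp only [log_gaussianPDFReal m' hw]
  exact (integrable_const _).sub ((integrable_sub_sq_gaussianReal m m' v).div_const _)

theorem integral_log_gaussianPDFReal (m m' : ℝ) {v w : ℝ≥0} (hw : w ≠ 0) :
    ∫ x, Real.log (gaussianPDFReal m' w x) ∂gaussianReal m v =
      -(1 / 2) * Real.log (2 * Real.pi) - 1 / 2 * Real.log w - (v + (m - m') ^ 2) / (2 * w) := by
  simp only [log_gaussianPDFReal m' hw]
  rw [integral_sub (integrable_const _) ((integrable_sub_sq_gaussianReal m m' v).div_const _),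
    integral_div, integral_sub_sq_gaussianReal]
  simp

theorem sub_one_sub_log_le_sq {x : ℝ} (hx : 1 / 2 ≤ x) :
    x - 1 - Real.log x ≤ (x - 1) ^ 2 := by
  have hx0 : 0 < x := by linarith
  rcases le_total x 1 with h1 | h1
  · have hanti : AntitoneOn (fun y : ℝ => (y - 1) ^ 2 - (y - 1) + Real.log y)
        (Set.Icc (1 / 2) 1) := by
      have hder : ∀ y : ℝ, 0 < y → HasDerivAt (fun y : ℝ => (y - 1) ^ 2 - (y - 1) + Real.log y)
          ((2 * y - 1) * (y - 1) / y) y := by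
        intro y hy
        have := ((((hasDerivAt_id y).sub_const 1).pow 2).sub ((hasDerivAt_id y).sub_const 1)).add
          (Real.hasDerivAt_log hy.ne')
        refine this.congr_deriv ?_
        simp
        field_simp
        ring
      refine antitoneOn_of_deriv_nonpos (convex_Icc _ _) ?_ ?_ ?_
      · exact fun y hy => (hder y (by linarith [hy.1])).continuousAt.continuousWithinAt
      · rw [interior_Icc]
        exact fun y hy =>
          (hder y (by linarith [hy.1])).differentiableAt.differentiableWithinAt
      · rw [interior_Icc]
        intro y hy
        rw [(hder y (by linarith [hy.1])).deriv]
        exact div_nonpos_of_nonpos_of_nonneg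
          (mul_nonpos_of_nonneg_of_nonpos (by linarith [hy.1]) (by linarith [hy.2]))
          (by linarith [hy.1])
    have := hanti ⟨hx, h1⟩ ⟨by norm_num, le_rfl⟩ h1
    norm_num at this
    linarith
  · have h2 := Real.one_sub_inv_le_log_of_pos hx0
    have h3 : x - 2 + x⁻¹ ≤ (x - 1) ^ 2 := by
      have : x - 2 + x⁻¹ = (x - 1) ^ 2 * x⁻¹ := by field_simp; ring
      rw [this]
      exact mul_le_of_le_one_right (sq_nonneg _) (inv_le_one_of_one_le₀ h1)
    linarith

theorem sq_measureReal_pi_gaussianReal_sub_le {ι : Type*} [Fintype ι] (m : ι → ℝ) {v : ι → ℝ≥0}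
    (hv : ∀ i, 1 / 2 ≤ (v i : ℝ)) {A : Set (ι → ℝ)} (hA : MeasurableSet A) :
    ((Measure.pi fun i => gaussianReal 0 (v i)).real A -
      (Measure.pi fun i => gaussianReal (m i) 1).real A) ^ 2 ≤
      (1 / 4) * (∑ i, ((v i : ℝ) - 1) ^ 2 + ∑ i, m i ^ 2) := by
  have hv0 : ∀ i, v i ≠ 0 := fun i h => by have := hv i; rw [h] at this; norm_num at this
  set g : (ι → ℝ) → ℝ := fun y => ∑ i, (Real.log (gaussianPDFReal 0 (v i) (y i)) -
    Real.log (gaussianPDFReal (m i) 1 (y i))) with hg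
  have hpdf : ∀ (a : ℝ) (w : ℝ≥0), Measurable (gaussianPDFReal a w) :=
    measurable_gaussianPDFReal
  have hgm : Measurable g := by
    refine Finset.measurable_sum _ fun i _ => ?_
    exact ((hpdf _ _).comp (measurable_pi_apply i)).log.sub
      ((hpdf _ _).comp (measurable_pi_apply i)).log
  have hPQ : (Measure.pi fun i => gaussianReal 0 (v i)) =
      (Measure.pi fun i => gaussianReal (m i) 1).withDensity
        fun y => ENNReal.ofReal (Real.exp (g y)) := by
    rw [pi_gaussianReal_eq_withDensity _ hv0,
      pi_gaussianReal_eq_withDensity m fun _ => one_ne_zero, ← withDensity_mul]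
    · congr 1
      ext y
      have hp0 : ∀ i, 0 < gaussianPDFReal 0 (v i) (y i) := fun i =>
        gaussianPDFReal_pos _ _ _ (hv0 i)
      have hp1 : ∀ i, 0 < gaussianPDFReal (m i) 1 (y i) := fun i =>
        gaussianPDFReal_pos _ _ _ one_ne_zero
      rw [Pi.mul_apply, ← ENNReal.ofReal_mul (Finset.prod_nonneg fun i _ => (hp1 i).le),
        hg, Real.exp_sum, ← Finset.prod_mul_distrib]
      congr 1
      refine Finset.prod_congr rfl fun i _ => ?_
      rw [Real.exp_sub, Real.exp_log (hp0 i), Real.exp_log (hp1 i), mul_div_cancel₀ _ (hp1 i).ne']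
    · exact (Finset.measurable_prod _ fun i _ =>
        (hpdf _ _).comp (measurable_pi_apply i)).ennreal_ofReal
    · fun_prop
  have hint : ∀ i, Integrable (fun x => Real.log (gaussianPDFReal 0 (v i) x) -
      Real.log (gaussianPDFReal (m i) 1 x)) (gaussianReal 0 (v i)) := fun i =>
    (integrable_log_gaussianPDFReal _ _ (hv0 i)).sub
      (integrable_log_gaussianPDFReal _ _ one_ne_zero)
  have hinti : ∀ i, Integrable (fun y : ι → ℝ => Real.log (gaussianPDFReal 0 (v i) (y i)) -
      Real.log (gaussianPDFReal (m i) 1 (y i))) (Measure.pi fun i => gaussianReal 0 (v i)) :=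
    fun i => integrable_comp_eval (μ := fun i => gaussianReal 0 (v i)) (i := i)
      (f := fun x => Real.log (gaussianPDFReal 0 (v i) x) -
        Real.log (gaussianPDFReal (m i) 1 x)) (hint i)
  have hle := two_mul_sq_measureReal_sub_le hgm hPQ
    (integrable_finsetSum _ fun i _ => hinti i) hA
  have heval : ∫ y, g y ∂(Measure.pi fun i => gaussianReal 0 (v i)) =
      ∑ i, 1 / 2 * ((v i : ℝ) - 1 - Real.log (v i) + m i ^ 2) := by
    simp only [hg]
    rw [integral_finsetSum _ fun i _ => hinti i]
    refine Finset.sum_congr rfl fun i _ => ?_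
    rw [integral_comp_eval (μ := fun i => gaussianReal 0 (v i)) (i := i)
      (f := fun x => Real.log (gaussianPDFReal 0 (v i) x) -
        Real.log (gaussianPDFReal (m i) 1 x)) (hint i).aestronglyMeasurable,
      integral_sub (integrable_log_gaussianPDFReal _ _ (hv0 i))
        (integrable_log_gaussianPDFReal _ _ one_ne_zero),
      integral_log_gaussianPDFReal _ _ (hv0 i), integral_log_gaussianPDFReal _ _ one_ne_zero]
    have : (v i : ℝ) ≠ 0 := by exact_mod_cast hv0 i
    simp
    field_simp
    ring
  rw [heval] at hle
  have hsum : ∑ i, 1 / 2 * ((v i : ℝ) - 1 - Real.log (v i) + m i ^ 2) ≤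
      1 / 2 * (∑ i, ((v i : ℝ) - 1) ^ 2 + ∑ i, m i ^ 2) := by
    rw [← Finset.sum_add_distrib, Finset.mul_sum]
    gcongr with i _
    exact sub_one_sub_log_le_sq (hv i)
  linarith

theorem frobNorm_sq {n : ℕ} (M : Matrix (Fin n) (Fin n) ℝ) :
    frobNorm M ^ 2 = (M * Mᵀ).trace := by
  rw [frobNorm, Real.sq_sqrt (by positivity)]
  simp [trace, mul_apply, sq]

theorem frobNorm_conj_diagonal_sq {n : ℕ} {U : Matrix (Fin n) (Fin n) ℝ} (hU : Uᵀ * U = 1)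
    (d : Fin n → ℝ) : frobNorm (U * diagonal d * Uᵀ) ^ 2 = ∑ i, d i ^ 2 := by
  have : U * diagonal d * Uᵀ * (U * diagonal d * Uᵀ)ᵀ =
      U * (diagonal d * (Uᵀ * U) * diagonal d * Uᵀ) := by
    simp only [transpose_mul, transpose_transpose, diagonal_transpose, Matrix.mul_assoc]
  rw [frobNorm_sq, this, hU, trace_mul_comm, Matrix.mul_one, Matrix.mul_assoc, hU, Matrix.mul_one,
    diagonal_mul_diagonal, trace_diagonal]
  simp [sq]

/-- Let `S1, S2 ≻ 0` with all eigenvalues of `S2^{-1/2} S1 S2^{-1/2}`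
at least `1/2` (here `R = S2^{-1/2}` is the positive definite square root of `S2⁻¹`).
Then `‖N(μ₁,S1) - N(μ₂,S2)‖_TV ≤ ½ √(‖S2^{-1/2}S1S2^{-1/2} - I‖_F² + (μ₂-μ₁)ᵀS2⁻¹(μ₂-μ₁))`. -/
theorem stmt_13 (n : ℕ) (S1 S2 R : Matrix (Fin n) (Fin n) ℝ)
    (h1 : S1.PosDef) (h2 : S2.PosDef) (hR : R.PosDef) (hRS : R * R = S2⁻¹)
    (heig : (R * S1 * R - (1 / 2 : ℝ) • (1 : Matrix (Fin n) (Fin n) ℝ)).PosSemidef)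
    (μ₁ μ₂ : Fin n → ℝ) :
    tvDist (gaussianMeasure n μ₁ S1) (gaussianMeasure n μ₂ S2)
      ≤ (1 / 2) * Real.sqrt (frobNorm (R * S1 * R - 1) ^ 2
          + ((μ₂ - μ₁) ⬝ᵥ S2⁻¹ *ᵥ (μ₂ - μ₁))) := by
  have hRt : Rᵀ = R := by simpa using hR.isHermitian.eq
  have hS1t : S1ᵀ = S1 := by simpa using h1.isHermitian.eq
  have hRu : IsUnit R.det := hR.det_pos.ne'.isUnit
  have hM : (R * S1 * R).IsHermitian := by
    rw [IsHermitian, conjTranspose_eq_transpose_of_trivial, transpose_mul, transpose_mul, hRt,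
      hS1t, Matrix.mul_assoc]
  obtain ⟨U, d, hUU, hU, hMU⟩ : ∃ (U : Matrix (Fin n) (Fin n) ℝ) (d : Fin n → ℝ),
      U * Uᵀ = 1 ∧ Uᵀ * U = 1 ∧ R * S1 * R = U * diagonal d * Uᵀ := by
    refine ⟨hM.eigenvectorUnitary, hM.eigenvalues, ?_, ?_, ?_⟩
    · simpa [star_eq_conjTranspose] using Unitary.coe_mul_star_self hM.eigenvectorUnitary
    · simpa [star_eq_conjTranspose] using Unitary.coe_star_mul_self hM.eigenvectorUnitary
    · have := hM.spectral_theorem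
      rw [Unitary.conjStarAlgAut_apply] at this
      simpa [star_eq_conjTranspose, Function.comp_def] using this
  have hd : ∀ i, 1 / 2 ≤ d i := by
    intro i
    have h3 := (heig.conjTranspose_mul_mul_same U).diag_nonneg (i := i)
    have h4 : Uᴴ * (R * S1 * R - (1 / 2 : ℝ) • (1 : Matrix (Fin n) (Fin n) ℝ)) * U =
        diagonal d - (1 / 2 : ℝ) • (1 : Matrix (Fin n) (Fin n) ℝ) := by
      have : Uᵀ * (U * diagonal d * Uᵀ) * U = (Uᵀ * U) * diagonal d * (Uᵀ * U) := by
        simp only [Matrix.mul_assoc]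
      rw [hMU, conjTranspose_eq_transpose_of_trivial, Matrix.mul_sub, Matrix.sub_mul, this, hU]
      simp [hU]
    rw [h4] at h3
    simpa using h3
  lift d to Fin n → ℝ≥0 using fun i => by linarith [hd i]
  replace hd : ∀ i, 1 / 2 ≤ (d i : ℝ) := hd
  have hd0 : ∀ i, d i ≠ 0 := fun i h => by have := hd i; rw [h] at this; norm_num at this
  have hRR : R⁻¹ * R = 1 := nonsing_inv_mul _ hRu
  have hRR' : R * R⁻¹ = 1 := mul_nonsing_inv _ hRu
  have hRit : R⁻¹ᵀ = R⁻¹ := by rw [transpose_nonsing_inv, hRt]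
  set T := R⁻¹ * U with hT
  have hTT : (Uᵀ * R) * T = 1 := by
    rw [hT, Matrix.mul_assoc, ← Matrix.mul_assoc R, hRR', Matrix.one_mul, hU]
  have hTT' : T * (Uᵀ * R) = 1 := mul_eq_one_comm.mp hTT
  have hTdet : T.det ≠ 0 := (isUnit_det_of_left_inverse hTT).ne_zero
  have hS1 : S1 = T * diagonal (fun i => (d i : ℝ)) * Tᵀ := by
    calc S1 = (R⁻¹ * R) * S1 * (R * R⁻¹) := by rw [hRR, hRR', Matrix.one_mul, Matrix.mul_one]
      _ = R⁻¹ * (R * S1 * R) * R⁻¹ := by simp only [Matrix.mul_assoc]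
      _ = _ := by rw [hMU, hT, transpose_mul, hRit]; simp only [Matrix.mul_assoc]
  have hS2 : S2 = T * diagonal (fun _ => ((1 : ℝ≥0) : ℝ)) * Tᵀ := by
    rw [NNReal.coe_one, diagonal_one, Matrix.mul_one, hT, transpose_mul, hRit, Matrix.mul_assoc,
      ← Matrix.mul_assoc U, hUU, Matrix.one_mul, ← Matrix.mul_inv_rev, hRS,
      nonsing_inv_nonsing_inv _ h2.det_pos.ne'.isUnit]
  set m : Fin n → ℝ := (Uᵀ * R) *ᵥ (μ₂ - μ₁) with hm
  have hG1 : gaussianMeasure n μ₁ S1 =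
      (Measure.pi fun i => gaussianReal 0 (d i)).map fun y => μ₁ + T *ᵥ y := by
    have := gaussianMeasure_eq_map_pi hTdet hd0 μ₁ 0
    rwa [mulVec_zero, add_zero, ← hS1] at this
  have hG2 : gaussianMeasure n μ₂ S2 =
      (Measure.pi fun i => gaussianReal (m i) 1).map fun y => μ₁ + T *ᵥ y := by
    have := gaussianMeasure_eq_map_pi hTdet (v := fun _ => 1) (fun _ => one_ne_zero) μ₁ m
    rwa [hm, mulVec_mulVec, hTT', one_mulVec, add_sub_cancel, ← hS2] at this
  have hφ : Measurable fun y : Fin n → ℝ => μ₁ + T *ᵥ y :=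
    (Continuous.add continuous_const (continuous_const.matrix_mulVec continuous_id)).measurable
  have hfrob : frobNorm (R * S1 * R - 1) ^ 2 = ∑ i, ((d i : ℝ) - 1) ^ 2 := by
    rw [← frobNorm_conj_diagonal_sq hU, hMU, ← diagonal_sub, diagonal_one, Matrix.mul_sub,
      Matrix.sub_mul, Matrix.mul_one, hUU]
  have hquad : (μ₂ - μ₁) ⬝ᵥ S2⁻¹ *ᵥ (μ₂ - μ₁) = ∑ i, m i ^ 2 := by
    have : S2⁻¹ = (Uᵀ * R)ᵀ * (Uᵀ * R) := by
      rw [transpose_mul, transpose_transpose, hRt, Matrix.mul_assoc, ← Matrix.mul_assoc U, hUU,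
        Matrix.one_mul, hRS]
    rw [this, ← mulVec_mulVec, dotProduct_mulVec, vecMul_transpose, ← hm]
    simp [dotProduct, sq]
  refine csSup_le ⟨_, ∅, MeasurableSet.empty, rfl⟩ ?_
  rintro r ⟨A, hA, rfl⟩
  rw [hfrob, hquad, hG1, hG2, Measure.map_apply hφ hA, Measure.map_apply hφ hA]
  have key := sq_measureReal_pi_gaussianReal_sub_le m hd (hφ hA)
  refine abs_le_of_sq_le_sq' ?_ (by positivity) |> abs_le.mpr
  rw [mul_pow, Real.sq_sqrt (by positivity)]
  norm_num
  exact key
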